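/- arXiv:2206.05482 — 7 statements merged into one kernel-verified Lean document; each statement's English description precedes it below -/
import Mathlib

section
/- Let Â = A + εB be an n×n dual matrix. Then Â has dual index one if and only if there exists a real n×n matrix G that is a group inverse of A (so A has index one) and rank(A) equals the rank of the n×2n block matrix [A B(Iₙ − A·G)]. -/
open Matrix

/-- The dual matrix `A + εB`, viewed as a matrix over the dual numbers `ℝ[ε]`. -/
def dm {n : ℕ} (A B : Matrix (Fin n) (Fin n) ℝ) :
    Matrix (Fin n) (Fin n) (DualNumber ℝ) :=
  fun i j => TrivSqZeroExt.inl (A i j) + TrivSqZeroExt.inr (B i j)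

/-- A dual matrix has dual index one iff its column space equals that of its square,
equivalently (as shown in the paper) there is a dual matrix `X` with `M² * X = M`. -/
def DualIndexOne {n : ℕ} (M : Matrix (Fin n) (Fin n) (DualNumber ℝ)) : Prop :=
  ∃ X : Matrix (Fin n) (Fin n) (DualNumber ℝ), M * M * X = M

/-- `G` is a group inverse of the real matrix `A`. -/
def IsGroupInv {n : ℕ} (A G : Matrix (Fin n) (Fin n) ℝ) : Prop :=
  A * G * A = A ∧ G * A * G = G ∧ A * G = G * A

/-- `X` is the Moore–Penrose inverse of the real matrix `A`. -/
def IsMoorePenrose {n : ℕ} (A X : Matrix (Fin n) (Fin n) ℝ) : Prop :=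
  A * X * A = A ∧ X * A * X = X ∧ (A * X)ᵀ = A * X ∧ (X * A)ᵀ = X * A

/-- `C` is a core inverse of the real matrix `A`. -/
def IsCoreInv {n : ℕ} (A C : Matrix (Fin n) (Fin n) ℝ) : Prop :=
  A * C * A = A ∧ A * (C * C) = C ∧ (A * C)ᵀ = A * C

/-- `G` is a dual group generalized inverse (DGGI) of the dual matrix `M`. -/
def IsDGGI {n : ℕ} (M G : Matrix (Fin n) (Fin n) (DualNumber ℝ)) : Prop :=
  M * G * M = M ∧ G * M * G = G ∧ M * G = G * M

/-- `X` is a dual Moore–Penrose generalized inverse (DMPGI) of the dual matrix `M`. -/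
def IsDMPGI {n : ℕ} (M X : Matrix (Fin n) (Fin n) (DualNumber ℝ)) : Prop :=
  M * X * M = M ∧ X * M * X = X ∧ (M * X)ᵀ = M * X ∧ (X * M)ᵀ = X * M

/-- `G` is a dual core generalized inverse (DCGI) of the dual matrix `M`. -/
def IsDCGI {n : ℕ} (M G : Matrix (Fin n) (Fin n) (DualNumber ℝ)) : Prop :=
  M * G * M = M ∧ M * (G * G) = G ∧ (M * G)ᵀ = M * G

/-!
Write `M = A + εB`. The real part of `M² X = M` is `A² X₀ = A`, which over a field forces `A` to
have a group inverse `G`. Since then `A X₀ = A G`, the `ε`-part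
`A² X₁ + (A B + B A) X₀ = B` becomes `B (1 - A G) = A (A X₁ + B X₀)`, so it is solvable exactly
when the columns of `B (1 - A G)` lie in the column space of `A`. This is the rank condition.
-/

open TrivSqZeroExt DualNumber

/-- `g` is a group inverse of `a`, in any multiplicative structure. On real square matrices this
unfolds to `IsGroupInv`. -/
def IsGroupInverse {M : Type*} [Mul M] (a g : M) : Prop :=
  a * g * a = a ∧ g * a * g = g ∧ a * g = g * a

theorem isGroupInverse_of_mul_self_mul_eq_of_mul_mul_self_eq {S : Type*} [Semigroup S]
    {a x y : S} (hx : a * a * x = a) (hy : y * (a * a) = a) : IsGroupInverse a (y * a * x) := by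
  have hxy : a * x = y * a := by
    calc a * x = y * (a * a) * x := by rw [hy]
      _ = y * a := by rw [mul_assoc, hx]
  have hag : a * (y * a * x) = a * x := by
    rw [← hxy, ← mul_assoc, ← mul_assoc, hx]
  have hga : y * a * x * a = a * x := by
    rw [mul_assoc y, hxy, mul_assoc, mul_assoc y, hy]
  have haxa : a * x * a = a := by
    rw [hxy, mul_assoc, hy]
  refine ⟨by rw [hag, haxa], ?_, by rw [hag, hga]⟩
  rw [hga, ← hxy, ← mul_assoc, ← mul_assoc, haxa]

theorem inl_add_inr_mul_self_mul_eq_iff {R : Type*} [Semiring R] {a b : R} {x : R[ε]} :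
    (inl a + inr b) * (inl a + inr b) * x = inl a + inr b ↔
      a * a * x.fst = a ∧ a * a * x.snd + (a * b + b * a) * x.fst = b := by
  simp [TrivSqZeroExt.ext_iff, add_mul, add_assoc]

namespace IsGroupInverse

theorem mul_self_mul {S : Type*} [Semigroup S] {a g : S} (h : IsGroupInverse a g) :
    a * a * g = a := by
  rw [mul_assoc, h.2.2, ← mul_assoc, h.1]

theorem mul_eq_mul_of_mul_self_mul_eq {S : Type*} [Semigroup S] {a g x : S}
    (h : IsGroupInverse a g) (hx : a * a * x = a) : a * x = a * g := by
  calc a * x = g * a * a * x := by rw [← h.2.2, h.1]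
    _ = g * (a * a * x) := by simp only [mul_assoc]
    _ = a * g := by rw [hx, h.2.2]

theorem exists_dualNumber_mul_self_mul_eq_iff {R : Type*} [Ring R] {a g : R}
    (h : IsGroupInverse a g) (b : R) :
    (∃ x : R[ε], (inl a + inr b) * (inl a + inr b) * x = inl a + inr b) ↔
      ∃ z, b * (1 - a * g) = a * z := by
  constructor
  · rintro ⟨x, hx⟩
    obtain ⟨hfst, hsnd⟩ := inl_add_inr_mul_self_mul_eq_iff.1 hx
    refine ⟨a * x.snd + b * x.fst, ?_⟩
    rw [← h.mul_eq_mul_of_mul_self_mul_eq hfst, mul_sub, mul_one, sub_eq_iff_eq_add]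
    refine hsnd.symm.trans ?_
    noncomm_ring
  · rintro ⟨z, hz⟩
    have hsnd : a * a * (g * (z - b * g)) + (a * b + b * a) * g = b := by
      rw [← mul_assoc, h.mul_self_mul, mul_sub, ← hz]
      noncomm_ring
    refine ⟨inl g + inr (g * (z - b * g)), inl_add_inr_mul_self_mul_eq_iff.2 ⟨?_, ?_⟩⟩
    · simpa using h.mul_self_mul
    · simpa using hsnd

end IsGroupInverse

section Rank

variable {K l m n : Type*} [Fintype l] [Fintype n]

theorem range_mulVecLin_le_range_mulVecLin_iff [CommSemiring K] {P : Matrix m n K}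
    {Q : Matrix m l K} :
    LinearMap.range P.mulVecLin ≤ LinearMap.range Q.mulVecLin ↔ ∃ Z : Matrix l n K, P = Q * Z := by
  classical
  constructor
  · intro h
    have hcol (j : n) : ∃ z, Q *ᵥ z = P.col j := h ⟨Pi.single j 1, by simp⟩
    choose z hz using hcol
    exact ⟨(of z)ᵀ, ext_col fun j => (hz j).symm⟩
  · rintro ⟨Z, rfl⟩
    rw [mulVecLin_mul]
    exact LinearMap.range_comp_le_range _ _

theorem range_mulVecLin_fromCols [CommSemiring K] (P : Matrix m n K) (Q : Matrix m l K) :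
    LinearMap.range (fromCols P Q).mulVecLin =
      LinearMap.range P.mulVecLin ⊔ LinearMap.range Q.mulVecLin := by
  have hcol : (fromCols P Q).col = Sum.elim P.col Q.col := by
    ext (j | j) i <;> rfl
  simp only [range_mulVecLin, hcol, Set.Sum.elim_range, Submodule.span_union]

variable [Field K]

theorem rank_eq_rank_fromCols_iff {P : Matrix m n K} {Q : Matrix m l K} :
    P.rank = (fromCols P Q).rank ↔ ∃ Z : Matrix n l K, Q = P * Z := by
  rw [← range_mulVecLin_le_range_mulVecLin_iff, ← sup_eq_left, ← range_mulVecLin_fromCols]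
  refine ⟨fun h => (Submodule.eq_of_le_of_finrank_eq ?_ h).symm, fun h => by rw [rank, rank, h]⟩
  exact range_mulVecLin_fromCols P Q ▸ le_sup_left

theorem exists_mul_mul_eq_left_of_rank_le (P : Matrix m n K) (Q : Matrix n l K)
    (h : P.rank ≤ (P * Q).rank) : ∃ W : Matrix l n K, P * Q * W = P := by
  have hle : LinearMap.range (P * Q).mulVecLin ≤ LinearMap.range P.mulVecLin :=
    range_mulVecLin_le_range_mulVecLin_iff.2 ⟨Q, rfl⟩
  obtain ⟨W, hW⟩ := range_mulVecLin_le_range_mulVecLin_iff.1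
    (Submodule.eq_of_le_of_finrank_le hle h).ge
  exact ⟨W, hW.symm⟩

theorem exists_mul_mul_eq_right_of_rank_le [Fintype m] (P : Matrix l m K) (Q : Matrix m n K)
    (h : Q.rank ≤ (P * Q).rank) : ∃ W : Matrix m l K, W * (P * Q) = Q := by
  obtain ⟨W, hW⟩ := exists_mul_mul_eq_left_of_rank_le Qᵀ Pᵀ
    (by rwa [← transpose_mul, rank_transpose, rank_transpose])
  refine ⟨Wᵀ, transpose_injective ?_⟩
  rw [transpose_mul, transpose_mul, transpose_transpose, hW]

theorem exists_isGroupInverse_of_mul_self_mul_eq {A X : Matrix n n K} (hX : A * A * X = A) :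
    ∃ G, IsGroupInverse A G := by
  have hrank : A.rank ≤ (A * A).rank := by
    simpa only [hX] using rank_mul_le_left (A * A) X
  obtain ⟨Y, hY⟩ := exists_mul_mul_eq_right_of_rank_le A A hrank
  exact ⟨Y * A * X, isGroupInverse_of_mul_self_mul_eq_of_mul_mul_self_eq hX hY⟩

end Rank

theorem dualIndexOne_dm_iff {n : ℕ} (A B : Matrix (Fin n) (Fin n) ℝ) :
    DualIndexOne (dm A B) ↔
      ∃ X : (Matrix (Fin n) (Fin n) ℝ)[ε],
        (inl A + inr B) * (inl A + inr B) * X = inl A + inr B := by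
  have hdm : dualNumberEquiv (dm A B) = inl A + inr B := by
    ext <;> simp [dm]
  rw [DualIndexOne, dualNumberEquiv.surjective.exists, ← hdm]
  simp only [← map_mul, dualNumberEquiv.injective.eq_iff]

theorem stmt0_general {K n : Type*} [Field K] [Fintype n] [DecidableEq n] (A B : Matrix n n K) :
    (∃ X : (Matrix n n K)[ε], (inl A + inr B) * (inl A + inr B) * X = inl A + inr B) ↔
      ∃ G : Matrix n n K, IsGroupInverse A G ∧
        A.rank = (fromCols A (B * (1 - A * G))).rank := by
  constructor
  · rintro ⟨X, hX⟩
    obtain ⟨hfst, -⟩ := inl_add_inr_mul_self_mul_eq_iff.1 hX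
    obtain ⟨G, hG⟩ := exists_isGroupInverse_of_mul_self_mul_eq hfst
    have hfactor := (hG.exists_dualNumber_mul_self_mul_eq_iff B).1 ⟨X, hX⟩
    exact ⟨G, hG, rank_eq_rank_fromCols_iff.2 hfactor⟩
  · rintro ⟨G, hG, hrank⟩
    exact (hG.exists_dualNumber_mul_self_mul_eq_iff B).2 (rank_eq_rank_fromCols_iff.1 hrank)

theorem stmt0 {n : ℕ} (A B : Matrix (Fin n) (Fin n) ℝ) :
    DualIndexOne (dm A B) ↔
      ∃ G : Matrix (Fin n) (Fin n) ℝ, IsGroupInv A G ∧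
        A.rank = (Matrix.fromCols A (B * (1 - A * G))).rank :=
  (dualIndexOne_dm_iff A B).trans (stmt0_general A B)
end

section
/- Let Â = A + εB be an n×n dual matrix. Then Â has dual index one if and only if rank(A²) = rank(A) and the 2n×2n block matrix [[B, A],[A, 0]] has rank equal to 2·rank(A). -/
open Matrix

/-!
The real part of `(A + εB)² * X = A + εB` says that `A` has index one. In that case, choose `G`
commuting with `A` such that `A * G * A = A`, and let `Q = 1 - A * G`. Both conditions on `B` say
that `Q * B * Q = 0`. On the dual side, `Q` annihilates `A` from either side, so that comparing
the infinitesimal parts of `(A + εB)² * X = A + εB` leaves only `Q * B * Q`. On the rank side,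
block elimination along `A` turns the block matrix into one of rank
`2 * rank A + rank (Q * B * Q)`.
-/

open scoped DualNumber
open TrivSqZeroExt (fst snd inl inr fst_sum snd_sum)

section Algebra

theorem exists_commuting_inner_inverse_of_mul_self_mul_eq {S : Type*} [Semigroup S] {a x y : S}
    (hx : a * a * x = a) (hy : y * (a * a) = a) : ∃ g, Commute a g ∧ a * g * a = a := by
  have hax : a * x = y * a := by
    calc a * x = y * (a * a) * x := by rw [hy]
      _ = y * (a * a * x) := mul_assoc _ _ _
      _ = y * a := by rw [hx]
  have hleft : a * (y * a * x) = a * x := by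
    calc a * (y * a * x) = a * a * x * x := by simp only [← hax, mul_assoc]
      _ = a * x := by rw [hx]
  have hright : y * a * x * a = a * x := by
    calc y * a * x * a = y * (a * x * a) := by simp only [mul_assoc]
      _ = y * (y * (a * a)) := by rw [hax, mul_assoc]
      _ = a * x := by rw [hy, hax]
  refine ⟨y * a * x, hleft.trans hright.symm, ?_⟩
  rw [hleft, hax, mul_assoc, hy]

-- The left-hand side is the system of components of `(a + εb)² * (x + εy) = a + εb`.
theorem exists_dual_components_iff_of_commuting_inner_inverse {R : Type*} [Ring R] {a g : R} (b : R)
    (hcomm : Commute a g) (hg : a * g * a = a) :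
    (∃ x y, a * a * x = a ∧ a * a * y + (a * b + b * a) * x = b) ↔
      (1 - a * g) * b * (1 - g * a) = 0 := by
  have hQa : (1 - a * g) * a = 0 := by rw [sub_mul, one_mul, hg, sub_self]
  constructor
  · rintro ⟨x, y, hx, hxy⟩
    have hax : a * x = g * a := by
      calc a * x = g * (a * a * x) := by
            simp only [← mul_assoc, ← hcomm.eq, hg]
        _ = g * a := by rw [hx]
    have hQb : (1 - a * g) * b = (1 - a * g) * b * (g * a) := by
      calc (1 - a * g) * b
          = (1 - a * g) * (a * a * y + (a * b + b * a) * x) := by rw [hxy]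
        _ = (1 - a * g) * a * (a * y + b * x) + (1 - a * g) * b * (a * x) := by
            noncomm_ring
        _ = (1 - a * g) * b * (g * a) := by rw [hQa, zero_mul, zero_add, hax]
    rw [mul_sub, mul_one, ← hQb, sub_self]
  · intro hQbQ
    rw [← hcomm.eq] at hQbQ
    have haag : a * a * g = a := by rw [mul_assoc, hcomm.eq, ← mul_assoc, hg]
    -- With `x = g`, the second equation reads `a * a * y = c`.
    set c := b - (a * b + b * a) * g with hc
    have hQc : (1 - a * g) * c = 0 := by
      calc (1 - a * g) * c
          = (1 - a * g) * b * (1 - a * g) - (1 - a * g) * a * (b * g) := by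
            rw [hc]; noncomm_ring
        _ = 0 := by rw [hQa, zero_mul, sub_zero, hQbQ]
    have hagc : a * g * c = c := by
      rwa [sub_mul, one_mul, sub_eq_zero, eq_comm] at hQc
    refine ⟨g, g * g * c, haag, ?_⟩
    calc a * a * (g * g * c) + (a * b + b * a) * g
        = a * a * g * g * c + (a * b + b * a) * g := by simp only [mul_assoc]
      _ = b := by rw [haag, hagc, hc, sub_add_cancel]

end Algebra

section Rank

variable {K l m n o : Type*} [Field K]

theorem exists_mul_eq_iff_range_mulVecLin_le {R : Type*} [CommSemiring R] [Fintype m] [Fintype n]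
    {A : Matrix l m R} {B : Matrix l n R} :
    (∃ X : Matrix n m R, B * X = A) ↔
      LinearMap.range A.mulVecLin ≤ LinearMap.range B.mulVecLin := by
  classical
  constructor
  · rintro ⟨X, rfl⟩
    rw [mulVecLin_mul]
    exact LinearMap.range_comp_le_range _ _
  · intro h
    have hcol (j : m) : ∃ x, B *ᵥ x = A.col j := h ⟨Pi.single j 1, by simp⟩
    choose x hx using hcol
    exact ⟨of fun i j => x j i, ext_col hx⟩

theorem matrix_rank_eq_zero_iff [Finite m] [Fintype n] {A : Matrix m n K} : A.rank = 0 ↔ A = 0 := by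
  classical
  rw [rank, Submodule.finrank_eq_zero, LinearMap.range_eq_bot, ← toLin'_apply',
    LinearEquiv.map_eq_zero_iff]

theorem rank_mul_eq_rank_left_iff [Finite l] [Fintype m] [Fintype n] {A : Matrix l m K}
    {B : Matrix m n K} : (A * B).rank = A.rank ↔ ∃ X : Matrix n m K, A * B * X = A := by
  constructor
  · intro h
    have hle : LinearMap.range (A * B).mulVecLin ≤ LinearMap.range A.mulVecLin :=
      exists_mul_eq_iff_range_mulVecLin_le.1 ⟨B, rfl⟩
    exact exists_mul_eq_iff_range_mulVecLin_le.2 (Submodule.eq_of_le_of_finrank_eq hle h).ge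
  · rintro ⟨X, hX⟩
    refine (rank_mul_le_left A B).antisymm ?_
    calc A.rank = (A * B * X).rank := by rw [hX]
      _ ≤ (A * B).rank := rank_mul_le_left _ _

theorem rank_mul_eq_rank_right_iff [Fintype l] [Fintype m] [Fintype n] {A : Matrix l m K}
    {B : Matrix m n K} : (A * B).rank = B.rank ↔ ∃ X : Matrix m l K, X * (A * B) = B := by
  rw [← rank_transpose (A * B), ← rank_transpose B, transpose_mul, rank_mul_eq_rank_left_iff,
    (transposeAddEquiv m l K).surjective.exists]
  simp only [transposeAddEquiv_apply, ← transpose_mul, transpose_inj]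

theorem exists_commuting_inner_inverse_of_rank_mul_self_eq [Fintype m] {A : Matrix m m K}
    (h : (A * A).rank = A.rank) : ∃ G, Commute A G ∧ A * G * A = A := by
  obtain ⟨X, hX⟩ := rank_mul_eq_rank_left_iff.1 h
  obtain ⟨Y, hY⟩ := rank_mul_eq_rank_right_iff.1 h
  exact exists_commuting_inner_inverse_of_mul_self_mul_eq hX hY

theorem rank_add_eq_of_mul_eq_of_mul_eq_zero [Fintype m] [Fintype n] {X Y : Matrix m n K}
    {P : Matrix m m K} {Q : Matrix n n K} (hPX : P * X = X) (hPY : P * Y = 0)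
    (hXQ : X * Q = X) (hYQ : Y * Q = 0) :
    (X + Y).rank = X.rank + Y.rank := by
  classical
  have hX : (X + Y) * Q = X := by rw [Matrix.add_mul, hXQ, hYQ, add_zero]
  have hY : (X + Y) * (1 - Q) = Y := by rw [Matrix.mul_sub, Matrix.mul_one, hX, add_sub_cancel_left]
  have hsup : LinearMap.range (X + Y).mulVecLin =
      LinearMap.range X.mulVecLin ⊔ LinearMap.range Y.mulVecLin := by
    refine le_antisymm ?_ (sup_le (exists_mul_eq_iff_range_mulVecLin_le.1 ⟨_, hX⟩)
      (exists_mul_eq_iff_range_mulVecLin_le.1 ⟨_, hY⟩))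
    rw [mulVecLin_add]
    exact LinearMap.range_add_le _ _
  have hinf : LinearMap.range X.mulVecLin ⊓ LinearMap.range Y.mulVecLin = ⊥ := by
    rw [eq_bot_iff]
    rintro _ ⟨⟨v, rfl⟩, ⟨w, hw⟩⟩
    rw [mulVecLin_apply, mulVecLin_apply] at hw
    rw [Submodule.mem_bot, mulVecLin_apply, ← hPX, ← mulVec_mulVec, ← hw, mulVec_mulVec, hPY,
      zero_mulVec]
  have hdim := Submodule.finrank_sup_add_finrank_inf_eq (LinearMap.range X.mulVecLin)
    (LinearMap.range Y.mulVecLin)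
  rwa [← hsup, hinf, finrank_bot, add_zero] at hdim

theorem rank_fromBlocks_swap_cols {R : Type*} [CommSemiring R] [Fintype n] [Fintype o]
    (A : Matrix l n R) (B : Matrix l o R) (C : Matrix m n R) (D : Matrix m o R) :
    (fromBlocks B A D C).rank = (fromBlocks A B C D).rank := by
  rw [← rank_submatrix (fromBlocks A B C D) (Equiv.refl _) (Equiv.sumComm _ _)]
  simp

theorem rank_fromBlocks_swap_rows {R : Type*} [CommSemiring R] [Fintype n] [Fintype o]
    (A : Matrix l n R) (B : Matrix l o R) (C : Matrix m n R) (D : Matrix m o R) :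
    (fromBlocks C D A B).rank = (fromBlocks A B C D).rank := by
  rw [← rank_submatrix (fromBlocks A B C D) (Equiv.sumComm _ _) (Equiv.refl _)]
  simp

theorem rank_fromBlocks_zero₁₂_zero₂₁_zero₂₂ [Finite l] [Finite m] [Fintype n] [Fintype o]
    (A : Matrix l n K) : (fromBlocks A 0 0 (0 : Matrix m o K)).rank = A.rank := by
  classical
  cases nonempty_fintype l
  cases nonempty_fintype m
  let U : Matrix (l ⊕ m) l K := fromRows 1 0
  let V : Matrix n (n ⊕ o) K := fromCols 1 0
  have hpad : U * A * V = fromBlocks A 0 0 0 := by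
    simp [U, V, fromRows_mul, mul_fromCols, ← fromCols_fromRows_eq_fromBlocks]
  have hcut : Uᵀ * (U * A * V) * Vᵀ = A := by
    rw [hpad]
    simp [U, V, transpose_fromRows, transpose_fromCols, fromCols_mul_fromBlocks,
      fromCols_mul_fromRows]
  rw [← hpad]
  apply le_antisymm
  · exact (rank_mul_le_left _ _).trans (rank_mul_le_right _ _)
  · conv_lhs => rw [← hcut]
    exact (rank_mul_le_left _ _).trans (rank_mul_le_right _ _)

theorem rank_fromBlocks_zero₁₂_zero₂₁ [Finite l] [Finite m] [Fintype n] [Fintype o]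
    (A : Matrix l n K) (D : Matrix m o K) : (fromBlocks A 0 0 D).rank = A.rank + D.rank := by
  classical
  cases nonempty_fintype l
  cases nonempty_fintype m
  have hsplit : fromBlocks A 0 0 D = fromBlocks A 0 0 0 + fromBlocks 0 0 0 D := by
    simp [fromBlocks_add]
  rw [hsplit, rank_add_eq_of_mul_eq_of_mul_eq_zero (P := fromBlocks 1 0 0 0)
    (Q := fromBlocks 1 0 0 0), rank_fromBlocks_zero₁₂_zero₂₁_zero₂₂, rank_fromBlocks_swap_rows,
    rank_fromBlocks_swap_cols, rank_fromBlocks_zero₁₂_zero₂₁_zero₂₂] <;>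
  simp [fromBlocks_multiply]

variable [Fintype l] [Fintype m] [Fintype n] [Fintype o]

theorem rank_fromBlocks_zero₂₁_of_mul_eq_zero {A : Matrix l n K} {E : Matrix l o K}
    {C : Matrix m o K} {A' : Matrix n l K} {C' : Matrix o m K} (hA : A * A' * A = A)
    (hC : C * C' * C = C) (hAE : A * A' * E = 0) (hEC : E * (C' * C) = 0) :
    (fromBlocks A E 0 C).rank = A.rank + C.rank + E.rank := by
  classical
  have hsplit : fromBlocks A E 0 C = fromBlocks A 0 0 C + fromBlocks 0 E 0 0 := by
    simp [fromBlocks_add]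
  rw [hsplit, rank_add_eq_of_mul_eq_of_mul_eq_zero (P := fromBlocks (A * A') 0 0 1)
    (Q := fromBlocks 1 0 0 (C' * C)), rank_fromBlocks_zero₁₂_zero₂₁, rank_fromBlocks_swap_cols,
    rank_fromBlocks_zero₁₂_zero₂₁_zero₂₂] <;>
  simp [fromBlocks_multiply, hA, hAE, hEC, ← Matrix.mul_assoc, hC]

theorem rank_fromBlocks_zero₂₁ [DecidableEq l] [DecidableEq o] {A : Matrix l n K}
    (B : Matrix l o K) {C : Matrix m o K} {A' : Matrix n l K} {C' : Matrix o m K}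
    (hA : A * A' * A = A) (hC : C * C' * C = C) :
    (fromBlocks A B 0 C).rank =
      A.rank + C.rank + ((1 - A * A') * B * (1 - C' * C)).rank := by
  classical
  set E := (1 - A * A') * B * (1 - C' * C) with hE
  have hP : IsIdempotentElem (A * A') := by rw [IsIdempotentElem, ← Matrix.mul_assoc, hA]
  have hQ : IsIdempotentElem (C' * C) := by
    rw [IsIdempotentElem, Matrix.mul_assoc, ← Matrix.mul_assoc C, hC]
  have hAE : A * A' * E = 0 := by
    rw [hE, ← Matrix.mul_assoc, ← Matrix.mul_assoc, hP.mul_one_sub_self, Matrix.zero_mul,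
      Matrix.zero_mul]
  have hEC : E * (C' * C) = 0 := by
    rw [hE, Matrix.mul_assoc, hQ.one_sub_mul_self, Matrix.mul_zero]
  let L : Matrix (l ⊕ m) (l ⊕ m) K := fromBlocks 1 (-((1 - A * A') * B * C')) 0 1
  let U : Matrix (n ⊕ o) (n ⊕ o) K := fromBlocks 1 (-(A' * B)) 0 1
  have helim : L * fromBlocks A B 0 C * U = fromBlocks A E 0 C := by
    have hcorner : -(A * (A' * B)) + (B - (1 - A * A') * B * C' * C) = E := by
      simp only [hE, Matrix.mul_sub, Matrix.sub_mul, Matrix.mul_one, Matrix.one_mul,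
        Matrix.mul_assoc]
      abel
    simp [L, U, fromBlocks_multiply, ← hcorner, sub_eq_add_neg]
  rw [← rank_fromBlocks_zero₂₁_of_mul_eq_zero hA hC hAE hEC, ← helim,
    rank_mul_eq_left_of_isUnit_det _ _ (by simp [U]),
    rank_mul_eq_right_of_isUnit_det _ _ (by simp [L])]

end Rank

section DualMatrix

variable {R l m n : Type*}

theorem eq_iff_map_fst_eq_and_map_snd_eq {M N : Matrix l n R[ε]} :
    M = N ↔ M.map fst = N.map fst ∧ M.map snd = N.map snd := by
  simp only [← Matrix.ext_iff, TrivSqZeroExt.ext_iff, map_apply, forall_and]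

variable [Semiring R]

theorem map_fst_map_inl_add_map_inr (A B : Matrix l n R) :
    (A.map inl + B.map inr : Matrix l n R[ε]).map fst = A := by
  ext
  simp

theorem map_snd_map_inl_add_map_inr (A B : Matrix l n R) :
    (A.map inl + B.map inr : Matrix l n R[ε]).map snd = B := by
  ext
  simp

variable [Fintype m]

theorem map_fst_mul (M : Matrix l m R[ε]) (N : Matrix m n R[ε]) :
    (M * N).map fst = M.map fst * N.map fst := by
  ext
  simp [mul_apply, fst_sum]

theorem map_snd_mul (M : Matrix l m R[ε]) (N : Matrix m n R[ε]) :
    (M * N).map snd = M.map fst * N.map snd + M.map snd * N.map fst := by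
  ext
  simp [mul_apply, snd_sum, Finset.sum_add_distrib]

theorem exists_mul_self_mul_eq_iff_map_fst_map_snd (M : Matrix m m R[ε]) :
    (∃ X, M * M * X = M) ↔ ∃ X Y : Matrix m m R,
      M.map fst * M.map fst * X = M.map fst ∧
        M.map fst * M.map fst * Y + (M.map fst * M.map snd + M.map snd * M.map fst) * X =
          M.map snd := by
  simp only [eq_iff_map_fst_eq_and_map_snd_eq, map_fst_mul, map_snd_mul]
  constructor
  · rintro ⟨X, hX⟩
    exact ⟨X.map fst, X.map snd, hX⟩
  · rintro ⟨X, Y, hXY⟩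
    refine ⟨X.map inl + Y.map inr, ?_⟩
    rwa [map_fst_map_inl_add_map_inr, map_snd_map_inl_add_map_inr]

end DualMatrix

theorem stmt1_general {K m : Type*} [Field K] [Fintype m] (A B : Matrix m m K) :
    (∃ X : Matrix m m K[ε],
      (A.map inl + B.map inr) * (A.map inl + B.map inr) * X = A.map inl + B.map inr) ↔
      (A * A).rank = A.rank ∧ (fromBlocks B A A 0).rank = 2 * A.rank := by
  classical
  have hindex : (∃ X Y, A * A * X = A ∧ A * A * Y + (A * B + B * A) * X = B) →
      (A * A).rank = A.rank :=
    fun ⟨X, _, hX, _⟩ => rank_mul_eq_rank_left_iff.2 ⟨X, hX⟩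
  rw [exists_mul_self_mul_eq_iff_map_fst_map_snd, map_fst_map_inl_add_map_inr,
    map_snd_map_inl_add_map_inr, ← and_iff_right_of_imp hindex]
  refine and_congr_right fun hrank => ?_
  obtain ⟨G, hcomm, hG⟩ := exists_commuting_inner_inverse_of_rank_mul_self_eq hrank
  rw [exists_dual_components_iff_of_commuting_inner_inverse B hcomm hG, rank_fromBlocks_swap_cols,
    rank_fromBlocks_zero₂₁ B hG hG, two_mul, Nat.add_eq_left, matrix_rank_eq_zero_iff]

theorem stmt1 {n : ℕ} (A B : Matrix (Fin n) (Fin n) ℝ) :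
    DualIndexOne (dm A B) ↔
      (A * A).rank = A.rank ∧
        (Matrix.fromBlocks B A A 0).rank = 2 * A.rank :=
  stmt1_general A B
end

section
/- Let Â = A + εB be an n×n dual matrix and suppose G is a group inverse of A (so A has index one). Then Â has a dual Moore–Penrose generalized inverse if and only if rank(A) equals the rank of the n×2n block matrix [A B(Iₙ − A·G)]. -/
open Matrix

/-!
For an idempotent `E` with transpose `F`, the matrix `u = E + F - 1` satisfies `E u = u F = E F` and
`F u = u E = F E`. Over an ordered field a vector killed by `u` is therefore killed by `E F` and
`F E`, hence by `E` and `F`, hence is zero: `u` is invertible. Since a dual matrix is invertible as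
soon as its real part is, the same holds over the dual numbers, where `E u⁻¹` is then a symmetric
idempotent with the same range as `E`. So a dual matrix with any inner inverse has a Moore–Penrose
inverse. Comparing `ε`-parts, `A + εB` has an inner inverse iff the columns of `B (1 - G A)` lie in
the column space of `A`, for any inner inverse `G` of `A`; a witness is `G - ε G B G`.
-/

section InnerInverse

variable {m n R : Type*} [Fintype m] [Fintype n]

/-- `Y` is an inner inverse (`{1}`-inverse) of the possibly rectangular matrix `M`: the first of the
Penrose equations. -/
def IsInnerInverse [NonUnitalSemiring R] (M : Matrix m n R) (Y : Matrix n m R) : Prop :=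
  M * Y * M = M

namespace IsInnerInverse

lemma isIdempotentElem_mul [NonUnitalSemiring R] {M : Matrix m n R} {Y : Matrix n m R}
    (h : IsInnerInverse M Y) : IsIdempotentElem (M * Y) := by
  rw [IsIdempotentElem, ← Matrix.mul_assoc, h]

lemma isIdempotentElem_mul' [NonUnitalSemiring R] {M : Matrix m n R} {Y : Matrix n m R}
    (h : IsInnerInverse M Y) : IsIdempotentElem (Y * M) := by
  rw [IsIdempotentElem, Matrix.mul_assoc, ← Matrix.mul_assoc M, h]

lemma transpose [NonUnitalCommSemiring R] {M : Matrix m n R} {Y : Matrix n m R}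
    (h : IsInnerInverse M Y) : IsInnerInverse Mᵀ Yᵀ := by
  rw [IsInnerInverse, ← transpose_mul, ← transpose_mul, ← Matrix.mul_assoc, h]

end IsInnerInverse

lemma exists_isSymm_of_isIdempotentElem [DecidableEq n] [CommRing R] {E : Matrix n n R}
    (hE : IsIdempotentElem E) (hu : IsUnit (E + Eᵀ - 1)) :
    ∃ P : Matrix n n R, P.IsSymm ∧ P * E = E ∧ E * P = P := by
  obtain ⟨u, hu⟩ := hu
  have hEt : Eᵀ * Eᵀ = Eᵀ := by rw [← transpose_mul, hE.eq]
  have hEtu : Eᵀ * u = Eᵀ * E := by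
    rw [hu, mul_sub, mul_add, hEt, mul_one, add_sub_cancel_right]
  have huE : u * E = Eᵀ * E := by
    rw [hu, sub_mul, add_mul, hE.eq, one_mul, add_sub_cancel_left]
  have hut : u.valᵀ = u := by
    rw [hu, transpose_sub, transpose_add, transpose_transpose, transpose_one, add_comm]
  have hinv_transpose : u⁻¹.valᵀ = u⁻¹ := by
    rw [coe_units_inv, transpose_nonsing_inv, hut]
  have hcomm : u⁻¹.val * Eᵀ = E * u⁻¹.val := by
    rw [Units.inv_mul_eq_iff_eq_mul, ← mul_assoc, Units.eq_mul_inv_iff_mul_eq, hEtu, huE]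
  refine ⟨E * u⁻¹.val, ?_, ?_, ?_⟩
  · rw [IsSymm, transpose_mul, hinv_transpose, hcomm]
  · rw [← hcomm, mul_assoc, ← huE, Units.inv_mul_cancel_left]
  · rw [← mul_assoc, hE.eq]

namespace IsInnerInverse

variable [CommRing R] {M : Matrix m n R} {Y : Matrix n m R}

lemma exists_isSymm_mul [DecidableEq m] (h : IsInnerInverse M Y)
    (hu : IsUnit (M * Y + (M * Y)ᵀ - 1)) :
    ∃ X, IsInnerInverse M X ∧ (M * X).IsSymm := by
  obtain ⟨P, hP_symm, hPE, hEP⟩ := exists_isSymm_of_isIdempotentElem h.isIdempotentElem_mul hu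
  have hMX : M * (Y * P) = P := by rw [← Matrix.mul_assoc, hEP]
  refine ⟨Y * P, ?_, by rwa [hMX]⟩
  calc M * (Y * P) * M = P * (M * Y * M) := by rw [hMX, h]
    _ = M := by rw [← Matrix.mul_assoc, hPE, h]

lemma exists_isSymm_mul' [DecidableEq n] (h : IsInnerInverse M Y)
    (hu : IsUnit (Y * M + (Y * M)ᵀ - 1)) :
    ∃ X, IsInnerInverse M X ∧ (X * M).IsSymm := by
  have hu' : IsUnit (Mᵀ * Yᵀ + (Mᵀ * Yᵀ)ᵀ - 1) := by
    rwa [← transpose_mul, transpose_transpose, add_comm]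
  obtain ⟨X, hX, hX_symm⟩ := h.transpose.exists_isSymm_mul hu'
  refine ⟨Xᵀ, hX.transpose, ?_⟩
  rwa [← isSymm_transpose_iff, transpose_mul, transpose_transpose]

lemma exists_moorePenrose [DecidableEq m] [DecidableEq n] (h : IsInnerInverse M Y)
    (hl : IsUnit (M * Y + (M * Y)ᵀ - 1)) (hr : IsUnit (Y * M + (Y * M)ᵀ - 1)) :
    ∃ X : Matrix n m R, M * X * M = M ∧ X * M * X = X ∧ (M * X).IsSymm ∧ (X * M).IsSymm := by
  obtain ⟨N, hN, hMN_symm⟩ := h.exists_isSymm_mul hl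
  obtain ⟨L, hL, hLM_symm⟩ := h.exists_isSymm_mul' hr
  -- Urquhart's formula: the Moore–Penrose inverse is `L * M * N`.
  have hMX : M * (L * M * N) = M * N := by
    rw [← Matrix.mul_assoc, ← Matrix.mul_assoc, hL]
  have hXM : L * M * N * M = L * M := by
    rw [Matrix.mul_assoc, Matrix.mul_assoc, ← Matrix.mul_assoc M, hN]
  refine ⟨L * M * N, by rw [hMX, hN], ?_, by rwa [hMX], by rwa [hXM]⟩
  rw [hXM, ← Matrix.mul_assoc (L * M), hL.isIdempotentElem_mul'.eq]

end IsInnerInverse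

end InnerInverse

section Invertibility

variable {n : Type*} [Fintype n] [DecidableEq n]

lemma isUnit_add_transpose_sub_one {K : Type*} [Field K] [LinearOrder K] [IsStrictOrderedRing K]
    {E : Matrix n n K} (hE : IsIdempotentElem E) : IsUnit (E + Eᵀ - 1) := by
  have hEt : Eᵀ * Eᵀ = Eᵀ := by rw [← transpose_mul, hE.eq]
  have mulVec_eq_zero {C : Matrix n n K} {v : n → K} (h : (Cᵀ * C) *ᵥ v = 0) : C *ᵥ v = 0 :=
    (ker_mulVecLin_transpose_mul_self C).le h
  rw [← mulVec_injective_iff_isUnit, ← coe_mulVecLin, injective_iff_map_eq_zero]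
  intro v hv
  rw [mulVecLin_apply] at hv
  have hEv : E *ᵥ v = 0 := mulVec_eq_zero <| by
    calc (Eᵀ * E) *ᵥ v = (Eᵀ * (E + Eᵀ - 1)) *ᵥ v := by
          rw [mul_sub, mul_add, hEt, mul_one, add_sub_cancel_right]
      _ = 0 := by rw [← mulVec_mulVec, hv, mulVec_zero]
  have hEtv : Eᵀ *ᵥ v = 0 := mulVec_eq_zero <| by
    calc (Eᵀᵀ * Eᵀ) *ᵥ v = (E * (E + Eᵀ - 1)) *ᵥ v := by
          rw [mul_sub, mul_add, hE.eq, mul_one, add_sub_cancel_left, transpose_transpose]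
      _ = 0 := by rw [← mulVec_mulVec, hv, mulVec_zero]
  rwa [sub_mulVec, add_mulVec, hEv, hEtv, one_mulVec, add_zero, zero_sub, neg_eq_zero] at hv

lemma isUnit_iff_isUnit_map_fst {R N : Type*} [CommRing R] [AddCommGroup N] [Module R N]
    [Module Rᵐᵒᵖ N] [IsCentralScalar R N] {M : Matrix n n (TrivSqZeroExt R N)} :
    IsUnit M ↔ IsUnit (M.map TrivSqZeroExt.fst) := by
  have hdet : M.det.fst = (M.map TrivSqZeroExt.fst).det :=
    (TrivSqZeroExt.fstHom R R N).map_det M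
  rw [isUnit_iff_isUnit_det, TrivSqZeroExt.isUnit_iff_isUnit_fst, hdet, ← isUnit_iff_isUnit_det]

lemma isUnit_add_transpose_sub_one_dualNumber {K : Type*} [Field K] [LinearOrder K]
    [IsStrictOrderedRing K] {E : Matrix n n (DualNumber K)} (hE : IsIdempotentElem E) :
    IsUnit (E + Eᵀ - 1) := by
  let φ := (TrivSqZeroExt.fstHom K K K).mapMatrix (m := n)
  have hφ : φ (E + Eᵀ - 1) = φ E + (φ E)ᵀ - 1 := by rw [map_sub, map_add, map_one]; rfl
  have hu : IsUnit (φ (E + Eᵀ - 1)) := hφ ▸ isUnit_add_transpose_sub_one (hE.map φ)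
  exact isUnit_iff_isUnit_map_fst.2 hu

end Invertibility

lemma rank_eq_rank_fromCols_iff_s6 {m n p K : Type*} [Finite m] [Fintype n] [Fintype p] [Field K]
    {A : Matrix m n K} {C : Matrix m p K} :
    A.rank = (fromCols A C).rank ↔ ∃ Z : Matrix n p K, A * Z = C := by
  classical
  have hA : fromCols A C * (fromRows 1 0 : Matrix (n ⊕ p) n K) = A := by
    rw [fromCols_mul_fromRows, Matrix.mul_one, Matrix.mul_zero, add_zero]
  constructor
  · intro hrank
    have hle : LinearMap.range A.mulVecLin ≤ LinearMap.range (fromCols A C).mulVecLin := by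
      conv_lhs => rw [← hA, mulVecLin_mul]
      exact LinearMap.range_comp_le_range _ _
    have hrange := Submodule.eq_of_le_of_finrank_eq hle hrank
    have hcol (j : p) : ∃ z, A *ᵥ z = C.col j := by
      suffices C.col j ∈ LinearMap.range A.mulVecLin from this
      rw [hrange]
      refine ⟨Sum.elim 0 (Pi.single j 1), ?_⟩
      rw [mulVecLin_apply, fromCols_mulVec_sumElim, mulVec_zero, zero_add, mulVec_single_one]
    choose z hz using hcol
    exact ⟨(of z)ᵀ, ext_col fun j ↦ hz j⟩
  · rintro ⟨Z, rfl⟩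
    refine le_antisymm ?_ ?_
    · conv_lhs => rw [← hA]
      exact rank_mul_le_left _ _
    · calc (fromCols A (A * Z)).rank = (A * fromCols 1 Z).rank := by
            rw [mul_fromCols, Matrix.mul_one]
        _ ≤ A.rank := rank_mul_le_left _ _

section DualMatrix

variable {n : ℕ}

lemma exists_isDMPGI_iff {M : Matrix (Fin n) (Fin n) (DualNumber ℝ)} :
    (∃ X, IsDMPGI M X) ↔ ∃ Y, IsInnerInverse M Y :=
  ⟨fun ⟨X, hX⟩ ↦ ⟨X, hX.1⟩, fun ⟨_, hY⟩ ↦ hY.exists_moorePenrose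
    (isUnit_add_transpose_sub_one_dualNumber hY.isIdempotentElem_mul)
    (isUnit_add_transpose_sub_one_dualNumber hY.isIdempotentElem_mul')⟩

lemma dm_mul_dm (A B C D : Matrix (Fin n) (Fin n) ℝ) :
    dm A B * dm C D = dm (A * C) (A * D + B * C) := by
  ext i j
  · simp [dm, Matrix.mul_apply, TrivSqZeroExt.fst_sum]
  · simp [dm, Matrix.mul_apply, TrivSqZeroExt.snd_sum, Finset.sum_add_distrib, mul_comm]

lemma dm_inj {A B C D : Matrix (Fin n) (Fin n) ℝ} : dm A B = dm C D ↔ A = C ∧ B = D := by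
  simp [← Matrix.ext_iff, dm, TrivSqZeroExt.ext_iff, forall_and]

lemma exists_dm_eq (X : Matrix (Fin n) (Fin n) (DualNumber ℝ)) : ∃ A B, dm A B = X :=
  ⟨X.map TrivSqZeroExt.fst, X.map TrivSqZeroExt.snd, by ext i j <;> simp [dm]⟩

lemma isInnerInverse_dm_iff {A B C D : Matrix (Fin n) (Fin n) ℝ} :
    IsInnerInverse (dm A B) (dm C D) ↔
      IsInnerInverse A C ∧ A * C * B + (A * D + B * C) * A = B := by
  rw [IsInnerInverse, dm_mul_dm, dm_mul_dm, dm_inj, IsInnerInverse]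

lemma exists_isInnerInverse_dm_iff {A B G : Matrix (Fin n) (Fin n) ℝ} (hG : IsInnerInverse A G) :
    (∃ Y, IsInnerInverse (dm A B) Y) ↔ ∃ Z, A * Z = B * (1 - G * A) := by
  constructor
  · rintro ⟨Y, hY⟩
    obtain ⟨C, D, rfl⟩ := exists_dm_eq Y
    obtain ⟨-, hB⟩ := isInnerInverse_dm_iff.1 hY
    have hA : A * (1 - G * A) = 0 := by rw [mul_sub, mul_one, ← mul_assoc, hG, sub_self]
    refine ⟨C * B * (1 - G * A), Eq.symm ?_⟩
    calc B * (1 - G * A) = (A * C * B + (A * D + B * C) * A) * (1 - G * A) := by rw [hB]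
      _ = A * (C * B * (1 - G * A)) + (A * D + B * C) * (A * (1 - G * A)) := by noncomm_ring
      _ = A * (C * B * (1 - G * A)) := by rw [hA, mul_zero, add_zero]
  · rintro ⟨Z, hZ⟩
    refine ⟨dm G (-(G * B * G)), isInnerInverse_dm_iff.2 ⟨hG, ?_⟩⟩
    have hAG : A * G * (B * (1 - G * A)) = B * (1 - G * A) := by rw [← hZ, ← mul_assoc, hG]
    calc A * G * B + (A * -(G * B * G) + B * G) * A
        = A * G * (B * (1 - G * A)) + B * G * A := by noncomm_ring
      _ = B := by rw [hAG]; noncomm_ring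

end DualMatrix

theorem stmt6_general {n : ℕ} (A B G : Matrix (Fin n) (Fin n) ℝ) (hG : IsInnerInverse A G) :
    (∃ X : Matrix (Fin n) (Fin n) (DualNumber ℝ), IsDMPGI (dm A B) X) ↔
      A.rank = (Matrix.fromCols A (B * (1 - G * A))).rank := by
  rw [exists_isDMPGI_iff, exists_isInnerInverse_dm_iff hG, rank_eq_rank_fromCols_iff_s6]

theorem stmt6 {n : ℕ} (A B G : Matrix (Fin n) (Fin n) ℝ)
    (hG : IsGroupInv A G) :
    (∃ X : Matrix (Fin n) (Fin n) (DualNumber ℝ), IsDMPGI (dm A B) X) ↔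
      A.rank = (Matrix.fromCols A (B * (1 - A * G))).rank := by
  rw [hG.2.2]
  exact stmt6_general A B G hG.1
end

section
/- Let Â = A + εB be an n×n dual matrix and let Ĝ = G + εR be a dual matrix with real n×n matrices G and R. Then Ĝ is a dual core generalized inverse of Â (i.e. ÂĜÂ = Â, ÂĜ² = Ĝ, (ÂĜ)^T = ÂĜ) if and only if G is a core inverse of A (AGA = A, AG² = G, (AG)^T = AG) and the following three real matrix equations hold: BGA + ARA + AGB = B; AGR + ARG + BG² = R; (AR + BG)^T = AR + BG. -/
open Matrix

section DualMatrix

variable {α l m n : Type*}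

/-- The dual matrix `A + εB` over the dual numbers of an arbitrary coefficient type, of which `dm`
is the square real case. -/
def dualMatrix [AddMonoid α] (A B : Matrix m n α) : Matrix m n (DualNumber α) :=
  A.map TrivSqZeroExt.inl + B.map TrivSqZeroExt.inr

/-- `G` is a core inverse of the square matrix `A`. Taking real entries gives `IsCoreInv`, and
taking dual-number entries gives `IsDCGI`. -/
def IsCoreInverse [Fintype m] [Mul α] [AddCommMonoid α] (A G : Matrix m m α) : Prop :=
  A * G * A = A ∧ A * (G * G) = G ∧ (A * G)ᵀ = A * G

theorem dualMatrix_inj [AddMonoid α] {A B C D : Matrix m n α} :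
    dualMatrix A B = dualMatrix C D ↔ A = C ∧ B = D := by
  simp [dualMatrix, ← Matrix.ext_iff, TrivSqZeroExt.ext_iff, forall_and]

theorem transpose_dualMatrix [AddMonoid α] (A B : Matrix m n α) :
    (dualMatrix A B)ᵀ = dualMatrix Aᵀ Bᵀ :=
  rfl

theorem dualMatrix_mul_dualMatrix [Fintype m] [NonUnitalNonAssocSemiring α]
    (A B : Matrix l m α) (C D : Matrix m n α) :
    dualMatrix A B * dualMatrix C D = dualMatrix (A * C) (A * D + B * C) := by
  ext i k
  · simp [dualMatrix, mul_apply, TrivSqZeroExt.fst_sum]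
  · simp [dualMatrix, mul_apply, TrivSqZeroExt.snd_sum, Finset.sum_add_distrib]

theorem dualMatrix_mul_mul_eq_self_iff [Fintype m] [Fintype n] [NonUnitalNonAssocSemiring α]
    {A B : Matrix m n α} {G R : Matrix n m α} :
    dualMatrix A B * dualMatrix G R * dualMatrix A B = dualMatrix A B ↔
      A * G * A = A ∧ B * G * A + A * R * A + A * G * B = B := by
  have dual_part : A * G * B + (A * R + B * G) * A = B * G * A + A * R * A + A * G * B := by
    rw [Matrix.add_mul]
    abel
  rw [dualMatrix_mul_dualMatrix, dualMatrix_mul_dualMatrix, dualMatrix_inj, dual_part]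

theorem dualMatrix_mul_mul_self_eq_iff [Fintype m] [NonUnitalSemiring α]
    {A B G R : Matrix m m α} :
    dualMatrix A B * (dualMatrix G R * dualMatrix G R) = dualMatrix G R ↔
      A * (G * G) = G ∧ A * G * R + A * R * G + B * (G * G) = R := by
  rw [dualMatrix_mul_dualMatrix, dualMatrix_mul_dualMatrix, dualMatrix_inj, Matrix.mul_add,
    ← Matrix.mul_assoc A G R, ← Matrix.mul_assoc A R G]

theorem transpose_dualMatrix_mul_eq_self_iff [Fintype n] [NonUnitalNonAssocSemiring α]
    {A B : Matrix m n α} {G R : Matrix n m α} :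
    (dualMatrix A B * dualMatrix G R)ᵀ = dualMatrix A B * dualMatrix G R ↔
      (A * G)ᵀ = A * G ∧ (A * R + B * G)ᵀ = A * R + B * G := by
  rw [dualMatrix_mul_dualMatrix, transpose_dualMatrix, dualMatrix_inj]

theorem stmt7_general [Fintype m] [NonUnitalSemiring α] (A B G R : Matrix m m α) :
    IsCoreInverse (dualMatrix A B) (dualMatrix G R) ↔
      IsCoreInverse A G ∧
        B * G * A + A * R * A + A * G * B = B ∧
        A * G * R + A * R * G + B * (G * G) = R ∧
        (A * R + B * G)ᵀ = A * R + B * G := by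
  rw [IsCoreInverse, IsCoreInverse, dualMatrix_mul_mul_eq_self_iff,
    dualMatrix_mul_mul_self_eq_iff, transpose_dualMatrix_mul_eq_self_iff]
  tauto

end DualMatrix

theorem stmt7 {n : ℕ} (A B G R : Matrix (Fin n) (Fin n) ℝ) :
    IsDCGI (dm A B) (dm G R) ↔
      IsCoreInv A G ∧
        B * G * A + A * R * A + A * G * B = B ∧
        A * G * R + A * R * G + B * (G * G) = R ∧
        (A * R + B * G)ᵀ = A * R + B * G :=
  stmt7_general A B G R
end

section
/- The dual core generalized inverse of a dual matrix is unique when it exists: if Â is an n×n dual matrix and Ĝ₁, Ĝ₂ are dual matrices each satisfying ÂĜᵢÂ = Â, ÂĜᵢ² = Ĝᵢ and (ÂĜᵢ)^T = ÂĜᵢ (i = 1,2), then Ĝ₁ = Ĝ₂. -/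
open Matrix

/-!
Two right core inverses `g`, `h` of `a` give the same projection: `a * g` and `a * h` are
self-adjoint and each fixes the range of the other, so they agree. In general the corner determined
by `p = a * g` only shows that `a * p` has the right inverse `g`; Dedekind finiteness makes this
inverse two-sided, which is the missing equation `g * a * a = a`. Then
`g = h * a * g = h * a * h = h`. Square dual matrices form such a ring because the dual numbers are
commutative, with transposition as the involution.
-/

section Ring

variable {R : Type*} [Ring R] [IsDedekindFiniteMonoid R]

/-- Dedekind finiteness passes to the corner `pRp`: adding `1 - p` turns one-sided inverses relative
to `p` into one-sided inverses relative to `1`. -/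
theorem corner_mul_eq_symm {p x y : R} (hpx : p * x = x) (hxp : x * p = x) (hpy : p * y = y)
    (hxy : x * y = p) : y * x = p := by
  have hpp : p * p = p :=
    calc p * p = p * x * y := by rw [mul_assoc, hxy]
      _ = p := by rw [hpx, hxy]
  have hright : (x + (1 - p)) * (y + (1 - p)) = 1 := by
    simp only [add_mul, mul_add, sub_mul, mul_sub, one_mul, mul_one, hxy, hxp, hpy, hpp]
    abel
  have hleft : (y + (1 - p)) * (x + (1 - p)) = 1 := mul_eq_one_symm hright
  calc y * x = (y + (1 - p)) * x := by rw [add_mul, sub_mul, hpx, one_mul, sub_self, add_zero]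
    _ = (y + (1 - p)) * ((x + (1 - p)) * p) := by
      rw [add_mul x, sub_mul, hxp, hpp, one_mul, sub_self, add_zero]
    _ = p := by rw [← mul_assoc, hleft, one_mul]

theorem mul_mul_self_eq_of_mul_mul_eq {a g : R} (haga : a * g * a = a) (hagg : a * (g * g) = g) :
    g * a * a = a := by
  have hpg : a * g * g = g := by rw [mul_assoc, hagg]
  have hpx : a * g * (a * (a * g)) = a * (a * g) := by rw [← mul_assoc, haga]
  have hxp : a * (a * g) * (a * g) = a * (a * g) := by
    rw [mul_assoc, ← mul_assoc (a * g) a g, haga]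
  have hxg : a * (a * g) * g = a * g := by rw [mul_assoc, hpg]
  have hgx : g * (a * (a * g)) = a * g := corner_mul_eq_symm hpx hxp hpg hxg
  calc g * a * a = g * a * (a * g * a) := by rw [haga]
    _ = g * (a * (a * g)) * a := by simp only [mul_assoc]
    _ = a := by rw [hgx, haga]

end Ring

section Star

theorem isSelfAdjoint_eq_of_mul_eq {R : Type*} [Mul R] [StarMul R] {p q : R}
    (hp : IsSelfAdjoint p) (hq : IsSelfAdjoint q) (hpq : p * q = q) (hqp : q * p = p) : p = q :=
  calc p = star (q * p) := by rw [hqp, hp.star_eq]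
    _ = p * q := by rw [star_mul, hp.star_eq, hq.star_eq]
    _ = q := hpq

theorem mul_eq_mul_of_mul_mul_eq_of_isSelfAdjoint {R : Type*} [Semigroup R] [StarMul R] {a g h : R}
    (haga : a * g * a = a) (hag : IsSelfAdjoint (a * g))
    (haha : a * h * a = a) (hah : IsSelfAdjoint (a * h)) : a * g = a * h :=
  isSelfAdjoint_eq_of_mul_eq hag hah (by rw [← mul_assoc, haga]) (by rw [← mul_assoc, haha])

/-- `g` is a right core inverse of `a`: the three equations defining a DCGI, in any ring with
involution. A core inverse satisfies `g * a * a = a` as well, which does not follow in general. -/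
structure IsRightCoreInverse {R : Type*} [Mul R] [Star R] (a g : R) : Prop where
  mul_mul_cancel : a * g * a = a
  mul_sq : a * (g * g) = g
  isSelfAdjoint : IsSelfAdjoint (a * g)

theorem stmt8_general {R : Type*} [Ring R] [StarMul R] [IsDedekindFiniteMonoid R] {a g h : R}
    (hg : IsRightCoreInverse a g) (hh : IsRightCoreInverse a h) : g = h := by
  have absorb {k : R} (hk : a * (k * k) = k) : h * a * k = k :=
    calc h * a * k = h * a * a * (k * k) := by rw [mul_assoc (h * a), hk]
      _ = k := by rw [mul_mul_self_eq_of_mul_mul_eq hh.mul_mul_cancel hh.mul_sq, hk]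
  have range_eq : a * g = a * h := mul_eq_mul_of_mul_mul_eq_of_isSelfAdjoint
    hg.mul_mul_cancel hg.isSelfAdjoint hh.mul_mul_cancel hh.isSelfAdjoint
  calc g = h * a * g := (absorb hg.mul_sq).symm
    _ = h * a * h := by rw [mul_assoc, range_eq, mul_assoc]
    _ = h := absorb hh.mul_sq

end Star

section Dual

-- With the trivial involution on the dual numbers, `star` of a dual matrix is its transpose.
attribute [local instance] starRingOfComm

theorem IsDCGI.isRightCoreInverse {n : ℕ} {M G : Matrix (Fin n) (Fin n) (DualNumber ℝ)}
    (h : IsDCGI M G) : IsRightCoreInverse M G :=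
  ⟨h.1, h.2.1, h.2.2⟩

end Dual

theorem stmt8 {n : ℕ} (M G₁ G₂ : Matrix (Fin n) (Fin n) (DualNumber ℝ))
    (h₁ : IsDCGI M G₁) (h₂ : IsDCGI M G₂) : G₁ = G₂ :=
  letI : StarRing (DualNumber ℝ) := starRingOfComm
  stmt8_general h₁.isRightCoreInverse h₂.isRightCoreInverse
end

section
/- Let Â = A + εB be an n×n dual matrix and let X be the Moore–Penrose inverse of A. Then Â has a dual core generalized inverse if and only if there exists a real n×n matrix G that is a group inverse of A (so A has index one) and (Iₙ − AX)·B·(Iₙ − A·G) = 0. -/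
open Matrix

/-!
For an idempotent `p` with `p * a = a` the decisive question is whether `u = a + (1 - p)` is a unit.
If it is, then `u⁻¹ * p` is a core inverse of `a` (when `p` is self-adjoint) and `a` has a group
inverse; `u` is a unit if `a` has a group inverse and `p = a * x` with `x` an inner inverse of `a`,
or, by Dedekind-finiteness, if `p = a * c` with `c` a core inverse. A dual number is a unit iff its
real part is, so `A + εB` has a core inverse as soon as `A` has a group inverse and the projection
`A * X` lifts to a dual projection fixing `A + εB`; the condition on `B` provides the lift.
Conversely, if `M = A + εB` has an inner inverse `N`, then the dual part of `M * N * M` is killed by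
`1 - A * X` on the left and `1 - G * A` on the right, which is the condition on `B`.
-/

open TrivSqZeroExt

open scoped DualNumber

/-- `g` is a group inverse of `a` in a semigroup; for real matrices this is `IsGroupInv`. -/
structure IsGroupInverse_s10 {R : Type*} [Mul R] (a g : R) : Prop where
  mul_inv_mul : a * g * a = a
  inv_mul_inv : g * a * g = g
  commute : Commute a g

/-- `c` is a core inverse of `a` with respect to the involution `star`; for dual matrices, viewed as
dual numbers over the ring of matrices, this is `IsDCGI`. -/
structure IsCoreInverse_s10 {R : Type*} [Mul R] [Star R] (a c : R) : Prop where
  mul_inv_mul : a * c * a = a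
  mul_inv_mul_inv : a * (c * c) = c
  isSelfAdjoint : IsSelfAdjoint (a * c)

section Ring

variable {R : Type*} [Ring R] {a c g p x : R}

theorem IsGroupInverse_s10.isUnit_add_one_sub_mul (hg : IsGroupInverse_s10 a g) (hx : a * x * a = a) :
    IsUnit (a + (1 - a * x)) := by
  have hgaa : g * a * a = a := by rw [← hg.commute.eq, hg.mul_inv_mul]
  have hagg : a * g * g = g := by rw [hg.commute.eq, hg.inv_mul_inv]
  have hxg : a * x * g = g := by
    calc a * x * g = a * x * (a * g * g) := by rw [hagg]
      _ = a * x * a * g * g := by simp only [mul_assoc]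
      _ = g := by rw [hx, hagg]
  refine isUnit_iff_exists.2 ⟨g * (a * x) + (1 - g * a), ?_, ?_⟩
  · calc (a + (1 - a * x)) * (g * (a * x) + (1 - g * a))
        = (a * g * a - a) * (x - 1) + (g - a * x * g) * (a * x - a) + 1 := by noncomm_ring
      _ = 1 := by simp [hg.mul_inv_mul, hxg]
  · calc (g * (a * x) + (1 - g * a)) * (a + (1 - a * x))
        = g * (a * x * a - a) * (1 - x) + (a - g * a * a) * (1 - x) + 1 := by noncomm_ring
      _ = 1 := by simp [hx, hgaa]

theorem isUnit_add_one_sub_mul_of_mul_mul_eq [IsDedekindFiniteMonoid R] (haca : a * c * a = a)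
    (hacc : a * (c * c) = c) : IsUnit (a + (1 - a * c)) := by
  refine .of_mul_eq_one (c * a * (c - 1 + a * c) + (1 - a * c)) ?_
  calc (a + (1 - a * c)) * (c * a * (c - 1 + a * c) + (1 - a * c))
      = (a * c * a - a) * (c - 1 + a * c) + (c - a * (c * c)) * a * (c - 1 + a * c)
        + (a * c * a - a) * c + 1 := by noncomm_ring
    _ = 1 := by simp [haca, hacc]

theorem exists_mul_eq_of_isUnit_add_one_sub (hp : IsIdempotentElem p) (hpa : p * a = a)
    (hu : IsUnit (a + (1 - p))) : ∃ c, a * c = p ∧ p * c = c ∧ c * a * a = a := by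
  obtain ⟨u, hu⟩ := hu
  have hpu : p * u = a := by rw [hu, mul_add, hpa, hp.mul_one_sub_self, add_zero]
  have hqu : (1 - p) * u = 1 - p := by
    rw [hu, mul_add, hp.one_sub.eq, sub_mul, hpa, one_mul, sub_self, zero_add]
  have hua : u * a = a * a := by rw [hu, add_mul, sub_mul, hpa, one_mul, sub_self, add_zero]
  refine ⟨↑u⁻¹ * p, ?_, ?_, ?_⟩
  · rw [← mul_assoc, ← (Units.eq_mul_inv_iff_mul_eq u).2 hpu, hp.eq]
  · have hqup : (1 - p) * (↑u⁻¹ * p) = 0 := by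
      rw [← mul_assoc, ← (Units.eq_mul_inv_iff_mul_eq u).2 hqu, hp.one_sub_mul_self]
    rwa [sub_mul, one_mul, sub_eq_zero, eq_comm] at hqup
  · rw [mul_assoc _ p, hpa, mul_assoc, ← hua, Units.inv_mul_cancel_left]

theorem exists_isGroupInverse_of_isUnit_add_one_sub (hp : IsIdempotentElem p) (hpa : p * a = a)
    (hu : IsUnit (a + (1 - p))) : ∃ g, IsGroupInverse_s10 a g := by
  obtain ⟨c, hac, hpc, hcaa⟩ := exists_mul_eq_of_isUnit_add_one_sub hp hpa hu
  have hag : a * (c * c * a) = c * a := by rw [← mul_assoc, ← mul_assoc, hac, hpc]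
  have hga : c * c * a * a = c * a := by rw [mul_assoc c, mul_assoc c, hcaa]
  refine ⟨c * c * a, ?_, ?_, hag.trans hga.symm⟩
  · rw [hag, hcaa]
  · rw [hga, mul_assoc, hag, mul_assoc]

theorem exists_isCoreInverse_of_isUnit_add_one_sub [Star R] (hp : IsStarProjection p)
    (hpa : p * a = a) (hu : IsUnit (a + (1 - p))) : ∃ c, IsCoreInverse_s10 a c := by
  obtain ⟨c, hac, hpc, -⟩ := exists_mul_eq_of_isUnit_add_one_sub hp.isIdempotentElem hpa hu
  exact ⟨c, by rw [hac, hpa], by rw [← mul_assoc, hac, hpc], hac ▸ hp.isSelfAdjoint⟩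

theorem IsCoreInverse_s10.exists_isGroupInverse [Star R] [IsDedekindFiniteMonoid R]
    (hc : IsCoreInverse_s10 a c) : ∃ g, IsGroupInverse_s10 a g :=
  exists_isGroupInverse_of_isUnit_add_one_sub
    (by rw [IsIdempotentElem, ← mul_assoc, hc.mul_inv_mul]) hc.mul_inv_mul
    (isUnit_add_one_sub_mul_of_mul_mul_eq hc.mul_inv_mul hc.mul_inv_mul_inv)

end Ring

/-- The involution of the dual numbers over a ring with involution acts on both parts separately, so
`ε` is self-adjoint. -/
instance instStarDualNumber {R : Type*} [Star R] : Star R[ε] where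
  star a := (star a.fst, star a.snd)

section DualNumber

theorem IsCoreInverse_s10.fst {R : Type*} [Semiring R] [Star R] {a c : R[ε]}
    (hc : IsCoreInverse_s10 a c) : IsCoreInverse_s10 a.fst c.fst where
  mul_inv_mul := congrArg TrivSqZeroExt.fst hc.mul_inv_mul
  mul_inv_mul_inv := congrArg TrivSqZeroExt.fst hc.mul_inv_mul_inv
  isSelfAdjoint := congrArg TrivSqZeroExt.fst hc.isSelfAdjoint

variable {R : Type*} [Ring R]

theorem one_sub_mul_snd_mul_one_sub_eq_zero {a c : R[ε]} {x y : R} (hc : a * c * a = a)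
    (hx : a.fst * x * a.fst = a.fst) (hy : a.fst * y * a.fst = a.fst) :
    (1 - a.fst * x) * a.snd * (1 - y * a.fst) = 0 := by
  have hsnd : a.snd = a.fst * (c.fst * a.snd + c.snd * a.fst) + a.snd * c.fst * a.fst := by
    conv_lhs => rw [← hc]
    simp only [DualNumber.snd_mul, fst_mul]
    noncomm_ring
  have hxa : (1 - a.fst * x) * a.fst = 0 := by rw [sub_mul, one_mul, hx, sub_self]
  have hay : a.fst * (1 - y * a.fst) = 0 := by rw [mul_sub, mul_one, ← mul_assoc, hy, sub_self]
  calc (1 - a.fst * x) * a.snd * (1 - y * a.fst)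
      = (1 - a.fst * x) * a.fst * (c.fst * a.snd + c.snd * a.fst) * (1 - y * a.fst)
        + (1 - a.fst * x) * a.snd * c.fst * (a.fst * (1 - y * a.fst)) := by
        conv_lhs => rw [hsnd]
        noncomm_ring
    _ = 0 := by rw [hxa, hay, zero_mul, zero_mul, mul_zero, add_zero]

theorem exists_isStarProjection_lift [StarRing R] {p y : R} {a : R[ε]}
    (hp : IsStarProjection p) (hpa : p * a.fst = a.fst)
    (h : (1 - p) * a.snd * (1 - y * a.fst) = 0) :
    ∃ P : R[ε], IsStarProjection P ∧ P.fst = p ∧ P * a = a := by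
  -- The dual part `k + star k` of the lift must be off-diagonal with respect to `p`. The lift then
  -- fixes `a` iff `k * a.fst = (1 - p) * a.snd`.
  let k := (1 - p) * a.snd * y * p
  have hpk : p * k = 0 := by
    simp only [k, ← mul_assoc, hp.mul_one_sub_self, zero_mul]
  have hkp : k * p = k := by
    simp only [k, mul_assoc, hp.isIdempotentElem.eq]
  have hstar_p : star k * p = 0 := by simpa [hp.isSelfAdjoint.star_eq] using congrArg star hpk
  have hp_star : p * star k = star k := by simpa [hp.isSelfAdjoint.star_eq] using congrArg star hkp
  have hka : k * a.fst = (1 - p) * a.snd := by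
    rw [mul_sub, mul_one, sub_eq_zero] at h
    calc k * a.fst = (1 - p) * a.snd * (y * (p * a.fst)) := by simp only [k, mul_assoc]
      _ = (1 - p) * a.snd := by rw [hpa, ← h]
  have hstar_a : star k * a.fst = 0 := by rw [← hpa, ← mul_assoc, hstar_p, zero_mul]
  refine ⟨(p, k + star k), ⟨TrivSqZeroExt.ext ?_ ?_, TrivSqZeroExt.ext ?_ ?_⟩, rfl,
    TrivSqZeroExt.ext ?_ ?_⟩
  · exact hp.isIdempotentElem
  · change p * (k + star k) + (k + star k) * p = k + star k
    rw [mul_add, add_mul, hpk, hp_star, hkp, hstar_p, zero_add, add_zero, add_comm]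
  · exact hp.isSelfAdjoint
  · exact IsSelfAdjoint.add_star_self k
  · exact hpa
  · change p * a.snd + (k + star k) * a.fst = a.snd
    rw [add_mul, hka, hstar_a, add_zero, sub_mul, one_mul, add_sub_cancel]

theorem stmt10_general [StarRing R] [IsDedekindFiniteMonoid R] {a b x : R}
    (hx : a * x * a = a) (hax : IsSelfAdjoint (a * x)) :
    (∃ c : R[ε], IsCoreInverse_s10 (inl a + inr b) c) ↔
      ∃ g : R, IsGroupInverse_s10 a g ∧ (1 - a * x) * b * (1 - a * g) = 0 := by
  obtain ⟨d, hd, rfl, rfl⟩ : ∃ d : R[ε], d = inl a + inr b ∧ d.fst = a ∧ d.snd = b :=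
    ⟨inl a + inr b, rfl, by simp, by simp⟩
  rw [← hd]
  constructor
  · rintro ⟨c, hc⟩
    obtain ⟨g, hg⟩ := hc.fst.exists_isGroupInverse
    refine ⟨g, hg, ?_⟩
    rw [hg.commute.eq]
    exact one_sub_mul_snd_mul_one_sub_eq_zero hc.mul_inv_mul hx hg.mul_inv_mul
  · rintro ⟨g, hg, h⟩
    have hp : IsStarProjection (d.fst * x) := ⟨by rw [IsIdempotentElem, ← mul_assoc, hx], hax⟩
    rw [hg.commute.eq] at h
    obtain ⟨P, hP, hPfst, hPd⟩ := exists_isStarProjection_lift hp hx h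
    refine exists_isCoreInverse_of_isUnit_add_one_sub hP hPd (isUnit_iff_isUnit_fst.2 ?_)
    simpa [hPfst] using hg.isUnit_add_one_sub_mul hx

end DualNumber

section Matrix

theorem dualNumberEquiv_transpose {R m : Type} [CommSemiring R] [Star R] [TrivialStar R]
    [Fintype m] [DecidableEq m] (M : Matrix m m R[ε]) :
    dualNumberEquiv Mᵀ = star (dualNumberEquiv M) := by
  refine TrivSqZeroExt.ext ?_ ?_ <;>
  · ext i j
    exact (star_trivial _).symm

variable {n : ℕ}

theorem dualNumberEquiv_dm (A B : Matrix (Fin n) (Fin n) ℝ) :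
    dualNumberEquiv (dm A B) = inl A + inr B := by
  refine TrivSqZeroExt.ext ?_ ?_ <;>
  · ext i j
    simp [dm]

theorem IsMoorePenrose.isSelfAdjoint_mul {A X : Matrix (Fin n) (Fin n) ℝ}
    (h : IsMoorePenrose A X) : IsSelfAdjoint (A * X) :=
  (conjTranspose_eq_transpose_of_trivial _).trans h.2.2.1

theorem isGroupInv_iff {A G : Matrix (Fin n) (Fin n) ℝ} :
    IsGroupInv A G ↔ IsGroupInverse_s10 A G :=
  ⟨fun ⟨hAGA, hGAG, hAG⟩ => ⟨hAGA, hGAG, hAG⟩,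
    fun h => ⟨h.mul_inv_mul, h.inv_mul_inv, h.commute⟩⟩

theorem isDCGI_iff {M G : Matrix (Fin n) (Fin n) ℝ[ε]} :
    IsDCGI M G ↔ IsCoreInverse_s10 (dualNumberEquiv M) (dualNumberEquiv G) := by
  have hself : (M * G)ᵀ = M * G ↔ IsSelfAdjoint (dualNumberEquiv M * dualNumberEquiv G) := by
    rw [IsSelfAdjoint, ← map_mul, ← dualNumberEquiv_transpose, EmbeddingLike.apply_eq_iff_eq]
  constructor
  · rintro ⟨hMGM, hMGG, hMG⟩
    exact ⟨by simp only [← map_mul, hMGM], by simp only [← map_mul, hMGG], hself.1 hMG⟩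
  · rintro ⟨hMGM, hMGG, hMG⟩
    simp only [← map_mul, EmbeddingLike.apply_eq_iff_eq] at hMGM hMGG
    exact ⟨hMGM, hMGG, hself.2 hMG⟩

theorem exists_isDCGI_dm_iff {A B : Matrix (Fin n) (Fin n) ℝ} :
    (∃ G, IsDCGI (dm A B) G) ↔
      ∃ c : (Matrix (Fin n) (Fin n) ℝ)[ε], IsCoreInverse_s10 (inl A + inr B) c := by
  simp only [isDCGI_iff, dualNumberEquiv_dm]
  exact dualNumberEquiv.surjective.exists.symm

end Matrix

theorem stmt10 {n : ℕ} (A B X : Matrix (Fin n) (Fin n) ℝ)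
    (hX : IsMoorePenrose A X) :
    (∃ G : Matrix (Fin n) (Fin n) (DualNumber ℝ), IsDCGI (dm A B) G) ↔
      ∃ G : Matrix (Fin n) (Fin n) ℝ, IsGroupInv A G ∧
        (1 - A * X) * B * (1 - A * G) = 0 := by
  simpa only [isGroupInv_iff] using
    exists_isDCGI_dm_iff.trans (stmt10_general hX.1 hX.isSelfAdjoint_mul)
end

section
/- Let Â be an n×n dual matrix, let Ĝ be a dual core generalized inverse of Â, let Ĥ be a dual group generalized inverse of Â, and let X̂ be a dual Moore–Penrose generalized inverse of Â. Then Ĝ = Ĥ·Â·X̂. -/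
open Matrix

/-!
If `x` is a `{1,3}`-inverse of `a`, then `a * x` is a self-adjoint idempotent having the same image
as `a`, and these two properties determine it. Since both the core inverse `g` and the
Moore–Penrose inverse `x` are `{1,3}`-inverses, `a * g = a * x`. The group inverse `h` makes `h * a`
act as the identity on the image of `a`, in which `g = a * (g * g)` lies, so
`g = h * (a * g) = h * (a * x)`.
-/

section StarSemigroup

variable {S : Type*} [Semigroup S] [StarMul S] {a g h p q x y : S}

theorem eq_of_isSelfAdjoint_of_mul_eq (hp : IsSelfAdjoint p) (hq : IsSelfAdjoint q)
    (hpq : p * q = q) (hqp : q * p = p) : p = q :=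
  calc
    p = star (q * p) := by rw [hqp, hp.star_eq]
    _ = p * q := by rw [star_mul, hp.star_eq, hq.star_eq]
    _ = q := hpq

/-- `x` is a `{1,3}`-inverse of `a`: it satisfies the first and the third of the four Penrose
equations, the ones that determine `a * x`. -/
structure IsOneThreeInverse (a x : S) : Prop where
  mul_mul_self : a * x * a = a
  isSelfAdjoint_mul : IsSelfAdjoint (a * x)

theorem IsOneThreeInverse.mul_eq_mul (hx : IsOneThreeInverse a x) (hy : IsOneThreeInverse a y) :
    a * x = a * y :=
  eq_of_isSelfAdjoint_of_mul_eq hx.isSelfAdjoint_mul hy.isSelfAdjoint_mul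
    (by rw [← mul_assoc, hx.mul_mul_self]) (by rw [← mul_assoc, hy.mul_mul_self])

theorem stmt13_general (hg : IsOneThreeInverse a g) (hgg : a * (g * g) = g)
    (hh : h * a * a = a) (hx : IsOneThreeInverse a x) : g = h * a * x :=
  calc
    g = a * (g * g) := hgg.symm
    _ = h * a * a * (g * g) := by rw [hh]
    _ = h * a * g := by rw [mul_assoc (h * a), hgg]
    _ = h * a * x := by rw [mul_assoc, hg.mul_eq_mul hx, mul_assoc]

end StarSemigroup

theorem stmt13 {n : ℕ} (M G H X : Matrix (Fin n) (Fin n) (DualNumber ℝ))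
    (hG : IsDCGI M G) (hH : IsDGGI M H) (hX : IsDMPGI M X) :
    G = H * M * X := by
  -- With the trivial star on the dual numbers, `star` on matrices is transposition.
  let _ : StarRing (DualNumber ℝ) := starRingOfComm
  exact stmt13_general ⟨hG.1, hG.2.2⟩ hG.2.1 (hH.2.2 ▸ hH.1) ⟨hX.1, hX.2.2.1⟩
end
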